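/- arXiv:2106.01155 — 4 statements merged into one kernel-verified Lean document; each statement's English description precedes it below -/
import Mathlib

section
/- Let B be a unital commutative associative algebra over F, let V = B², and let ⟨·,·⟩ : V × V → B be any skew-symmetric B-bilinear map. Then the algebra M = sl2(B) ⊕ V² of the construction is isomorphic as an F-algebra to M̃(sl2(B), α), where α = −⟨(1/2, 0), (0, 1/2)⟩. Conversely, for any unital commutative associative F-algebra U and any α ∈ U, the algebra M̃(sl2(U), α) is isomorphic to the algebra sl2(U) ⊕ (U²)² of the construction with ⟨(a,b),(c,d)⟩ = −4α(ad − bc). -/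
section
variable (K : Type*) [Field K] (B : Type*) [CommRing B] [Algebra K B]

/-- `sl2(B)`: trace-zero 2×2 matrices over `B` -/
def sl2T (B : Type*) [CommRing B] : Submodule B (Matrix (Fin 2) (Fin 2) B) :=
  LinearMap.ker (Matrix.traceLinearMap (Fin 2) B B)

lemma comm_mem_sl2T {B : Type*} [CommRing B] (A A' : Matrix (Fin 2) (Fin 2) B) :
    A * A' - A' * A ∈ sl2T B := by
  rw [sl2T, LinearMap.mem_ker, Matrix.traceLinearMap_apply, Matrix.trace_sub,
    Matrix.trace_mul_comm, sub_self]

variable (V : Type*) [AddCommGroup V] [Module B V]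

/-- the right action `(u,v)A = (au − bv, cu − av)` for `A = (1/2)[[a,−b],[c,−a]]` -/
def actV {B V : Type*} [CommRing B] [AddCommGroup V] [Module B V]
    (A : Matrix (Fin 2) (Fin 2) B) (p : V × V) : V × V :=
  ((2 : B) • (A 0 0 • p.1 + A 0 1 • p.2), (2 : B) • (A 1 0 • p.1 - A 0 0 • p.2))

/-- the `sl2(B)`-component of the product on `sl2(B) ⊕ V²` -/
noncomputable def conMulMat (bk : V → V → B)
    (X Y : ↥(sl2T B) × V × V) : Matrix (Fin 2) (Fin 2) B :=
  (X.1 : Matrix (Fin 2) (Fin 2) B) * (Y.1 : Matrix (Fin 2) (Fin 2) B) -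
    (Y.1 : Matrix (Fin 2) (Fin 2) B) * (X.1 : Matrix (Fin 2) (Fin 2) B) +
    algebraMap K B 2⁻¹ •
      !![algebraMap K B 2⁻¹ * (bk X.2.1 Y.2.2 + bk X.2.2 Y.2.1), -(bk X.2.1 Y.2.1);
         bk X.2.2 Y.2.2, -(algebraMap K B 2⁻¹ * (bk X.2.1 Y.2.2 + bk X.2.2 Y.2.1))]

lemma conMulMat_mem (bk : V → V → B) (X Y : ↥(sl2T B) × V × V) :
    conMulMat K B V bk X Y ∈ sl2T B := by
  rw [sl2T, LinearMap.mem_ker, Matrix.traceLinearMap_apply, conMulMat, Matrix.trace_add,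
    Matrix.trace_sub, Matrix.trace_mul_comm, Matrix.trace_smul, Matrix.trace_fin_two]
  simp

/-- the product of the construction `sl2(B) ⊕ V²` -/
noncomputable def conMul (bk : V → V → B) (X Y : ↥(sl2T B) × V × V) :
    ↥(sl2T B) × V × V :=
  (⟨conMulMat K B V bk X Y, conMulMat_mem K B V bk X Y⟩,
    actV (Y.1 : Matrix (Fin 2) (Fin 2) B) X.2 - actV (X.1 : Matrix (Fin 2) (Fin 2) B) Y.2)

/-- the symplectic involution on `M₂(B)` -/
def sympl {B : Type*} [CommRing B] (A : Matrix (Fin 2) (Fin 2) B) : Matrix (Fin 2) (Fin 2) B :=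
  !![A 1 1, -(A 0 1); -(A 1 0), A 0 0]

/-- the `sl2(B)`-component of the product of `M̃(sl2(B), α)` -/
def mtMulMat {B : Type*} [CommRing B] (α : B)
    (X Y : ↥(sl2T B) × Matrix (Fin 2) (Fin 2) B) : Matrix (Fin 2) (Fin 2) B :=
  (X.1 : Matrix (Fin 2) (Fin 2) B) * (Y.1 : Matrix (Fin 2) (Fin 2) B) -
    (Y.1 : Matrix (Fin 2) (Fin 2) B) * (X.1 : Matrix (Fin 2) (Fin 2) B) +
    α • (Y.2 * sympl X.2 - X.2 * sympl Y.2)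

lemma mtMulMat_mem {B : Type*} [CommRing B] (α : B)
    (X Y : ↥(sl2T B) × Matrix (Fin 2) (Fin 2) B) : mtMulMat α X Y ∈ sl2T B := by
  have h2 : Matrix.trace (α • (Y.2 * sympl X.2 - X.2 * sympl Y.2)) = 0 := by
    rw [Matrix.trace_smul, Matrix.trace_sub, Matrix.trace_fin_two, Matrix.trace_fin_two]
    simp [Matrix.mul_apply, Fin.sum_univ_two, sympl]
    ring_nf
  rw [sl2T, LinearMap.mem_ker, Matrix.traceLinearMap_apply, mtMulMat, Matrix.trace_add,
    Matrix.trace_sub, Matrix.trace_mul_comm, sub_self, zero_add, h2]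

/-- the product of `M̃(sl2(B), α) = sl2(B) ⊕ vM₂(B)`:
`A·B = AB − BA`, `A·(vB) = v(A*B − AB)`, `(vA)·(vB) = α(BA* − AB*)`. -/
def mtMul {B : Type*} [CommRing B] (α : B)
    (X Y : ↥(sl2T B) × Matrix (Fin 2) (Fin 2) B) :
    ↥(sl2T B) × Matrix (Fin 2) (Fin 2) B :=
  (⟨mtMulMat α X Y, mtMulMat_mem α X Y⟩,
    sympl (X.1 : Matrix (Fin 2) (Fin 2) B) * Y.2 - (X.1 : Matrix (Fin 2) (Fin 2) B) * Y.2 +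
      ((Y.1 : Matrix (Fin 2) (Fin 2) B) * X.2 - sympl (Y.1 : Matrix (Fin 2) (Fin 2) B) * X.2))

/-- the product of the exceptional Malcev algebra `M₇(B) = sl2(B) ⊕ vM₂(B)` -/
def m7Mul {B : Type*} [CommRing B] (X Y : ↥(sl2T B) × Matrix (Fin 2) (Fin 2) B) :
    ↥(sl2T B) × Matrix (Fin 2) (Fin 2) B := mtMul (1 : B) X Y


section
variable {K : Type*} [Field K] {B : Type*} [CommRing B] [Algebra K B]

/-- pairs of vectors in `B²`, read as the rows of a 2×2 matrix -/
def pairRowsEquiv (K B : Type*) [Field K] [CommRing B] [Algebra K B] :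
    ((B × B) × (B × B)) ≃ₗ[K] Matrix (Fin 2) (Fin 2) B where
  toFun p := !![p.1.1, p.1.2; p.2.1, p.2.2]
  invFun A := ((A 0 0, A 0 1), (A 1 0, A 1 1))
  map_add' p q := by ext i j; fin_cases i <;> fin_cases j <;> rfl
  map_smul' c p := by ext i j; fin_cases i <;> fin_cases j <;> rfl
  left_inv p := rfl
  right_inv A := by ext i j; fin_cases i <;> fin_cases j <;> rfl

/-- the identity on `sl2(B)` together with `pairRowsEquiv` on `V²` -/
def conEquiv (K B : Type*) [Field K] [CommRing B] [Algebra K B] :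
    (↥(sl2T B) × (B × B) × (B × B)) ≃ₗ[K] (↥(sl2T B) × Matrix (Fin 2) (Fin 2) B) :=
  (LinearEquiv.refl K ↥(sl2T B)).prodCongr (pairRowsEquiv K B)

lemma two_mul_algebraMap_inv_two (h2 : (2 : K) ≠ 0) : (2 : B) * algebraMap K B 2⁻¹ = 1 := by
  rw [← map_ofNat (algebraMap K B) 2, ← map_mul, mul_inv_cancel₀ h2, map_one]

lemma apply_one_one_of_mem_sl2T {A : Matrix (Fin 2) (Fin 2) B} (hA : A ∈ sl2T B) :
    A 1 1 = -A 0 0 := by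
  rw [sl2T, LinearMap.mem_ker, Matrix.traceLinearMap_apply, Matrix.trace_fin_two] at hA
  linear_combination hA

/-- A skew-symmetric bilinear form on `B²` is a multiple of the determinant. -/
lemma skew_bilin_eq_det (h2 : (2 : K) ≠ 0) (bk : B × B → B × B → B)
    (hskew : ∀ u v : B × B, bk u v = -(bk v u))
    (hlin : ∀ (b : B) (u u' v : B × B),
      bk (b • u + u') v = b * bk u v + bk u' v ∧ bk v (b • u + u') = b * bk v u + bk v u')
    (u v : B × B) :
    bk u v = -((4 : B) * -(bk (algebraMap K B 2⁻¹, 0) (0, algebraMap K B 2⁻¹)) *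
      (u.1 * v.2 - u.2 * v.1)) := by
  have hh := two_mul_algebraMap_inv_two (B := B) h2
  set h := algebraMap K B 2⁻¹
  have self_zero (w : B × B) : bk w w = 0 := by
    linear_combination h * hskew w w - bk w w * hh
  have zero_left (w : B × B) : bk 0 w = 0 := by
    have := (hlin 1 0 0 w).1
    simp only [smul_zero, add_zero] at this
    linear_combination -this
  have expand (w : B × B) : w = (2 * w.1) • (h, 0) + ((2 * w.2) • (0, h) + 0) := by
    ext <;> simp <;> [linear_combination -w.1 * hh; linear_combination -w.2 * hh]
  have zero_right (w : B × B) : bk w 0 = 0 := by rw [hskew, zero_left, neg_zero]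
  conv_lhs => rw [expand u, expand v]
  simp only [(hlin _ _ _ _).1, (hlin _ _ _ _).2, self_zero, zero_left, zero_right,
    hskew (0, h) (h, 0)]
  ring

lemma conEquiv_apply (X : ↥(sl2T B) × (B × B) × (B × B)) :
    conEquiv K B X = (X.1, !![X.2.1.1, X.2.1.2; X.2.2.1, X.2.2.2]) := rfl

lemma conEquiv_conMul (h2 : (2 : K) ≠ 0) (α : B) (bk : B × B → B × B → B)
    (hbk : ∀ u v, bk u v = -((4 : B) * α * (u.1 * v.2 - u.2 * v.1)))
    (X Y : ↥(sl2T B) × (B × B) × (B × B)) :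
    conEquiv K B (conMul K B (B × B) bk X Y) =
      mtMul α (conEquiv K B X) (conEquiv K B Y) := by
  have hh := two_mul_algebraMap_inv_two (B := B) h2
  obtain ⟨⟨P, hP⟩, ⟨x₁, x₂⟩, ⟨y₁, y₂⟩⟩ := X
  obtain ⟨⟨Q, hQ⟩, ⟨z₁, z₂⟩, ⟨t₁, t₂⟩⟩ := Y
  have hP' := apply_one_one_of_mem_sl2T hP
  have hQ' := apply_one_one_of_mem_sl2T hQ
  refine Prod.ext (Subtype.ext ?_) ?_
  · simp only [conEquiv_apply, conMul, mtMul, conMulMat, mtMulMat, hbk, sympl]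
    set h := algebraMap K B 2⁻¹
    have hq : 4 * (h * h) = 1 := by linear_combination (2 * h + 1) * hh
    congr 1
    ext i j
    fin_cases i <;> fin_cases j <;> simp
    · linear_combination -α * (x₁ * t₂ - x₂ * t₁ + (y₁ * z₂ - y₂ * z₁)) * hq
    · linear_combination 2 * α * (x₁ * z₂ - x₂ * z₁) * hh
    · linear_combination -2 * α * (y₁ * t₂ - y₂ * t₁) * hh
    · linear_combination α * (x₁ * t₂ - x₂ * t₁ + (y₁ * z₂ - y₂ * z₁)) * hq
  · ext i j
    fin_cases i <;> fin_cases j <;>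
      simp [conEquiv_apply, conMul, mtMul, actV, sympl, Matrix.mul_apply,
        Fin.sum_univ_two, hP', hQ'] <;> ring

/-- For `V = B²` and any skew-symmetric `B`-bilinear `⟨·,·⟩`, the
algebra `sl₂(B) ⊕ V²` of the construction is isomorphic (as an `F`-algebra) to
`M̃(sl₂(B), α)` with `α = −⟨(1/2, 0), (0, 1/2)⟩`; conversely, every `M̃(sl₂(U), α)` is
isomorphic to the construction `sl₂(U) ⊕ (U²)²` with `⟨(a,b),(c,d)⟩ = −4α(ad − bc)`. -/
theorem stmt12
    (h2 : (2 : K) ≠ 0) (h3 : (3 : K) ≠ 0)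
    (bk : B × B → B × B → B)
    (hskew : ∀ u v : B × B, bk u v = -(bk v u))
    (hlin : ∀ (b : B) (u u' v : B × B),
      bk (b • u + u') v = b * bk u v + bk u' v ∧ bk v (b • u + u') = b * bk v u + bk v u') :
    (∃ e : (↥(sl2T B) × (B × B) × (B × B)) ≃ₗ[K]
        (↥(sl2T B) × Matrix (Fin 2) (Fin 2) B),
      ∀ X Y, e (conMul K B (B × B) bk X Y) =
        mtMul (-(bk (algebraMap K B 2⁻¹, 0) (0, algebraMap K B 2⁻¹))) (e X) (e Y)) ∧
    (∀ α : B,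
      ∃ e : (↥(sl2T B) × Matrix (Fin 2) (Fin 2) B) ≃ₗ[K]
          (↥(sl2T B) × (B × B) × (B × B)),
        ∀ X Y, e (mtMul α X Y) =
          conMul K B (B × B)
            (fun u v => -((4 : B) * α * (u.1 * v.2 - u.2 * v.1))) (e X) (e Y)) := by
  refine ⟨⟨conEquiv K B, conEquiv_conMul h2 _ bk (skew_bilin_eq_det h2 bk hskew hlin)⟩,
    fun α => ⟨(conEquiv K B).symm, fun X Y => ?_⟩⟩
  rw [LinearEquiv.symm_apply_eq, conEquiv_conMul h2 α _ fun _ _ => rfl,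
    LinearEquiv.apply_symm_apply, LinearEquiv.apply_symm_apply]

end
end
end

section
/- Let U be a unital commutative associative algebra over F and α ∈ U. Then M̃(sl2(U), α) is a Malcev algebra over F (its product is anticommutative with X·X = 0 and satisfies the Malcev identity (XZ)(YT) = ((XY)Z)T + ((YZ)T)X + ((ZT)X)Y + ((TX)Y)Z), and it contains sl2(U) as a subalgebra. -/
section
variable (K : Type*) [Field K] (B : Type*) [CommRing B] [Algebra K B]

variable (V : Type*) [AddCommGroup V] [Module B V]

/-- The lower right entry of a trace-zero matrix is minus its upper left entry. -/
lemma sl2T_apply_one_one {B : Type*} [CommRing B] (A : ↥(sl2T B)) :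
    (A : Matrix (Fin 2) (Fin 2) B) 1 1 = -(A : Matrix (Fin 2) (Fin 2) B) 0 0 := by
  have h : Matrix.trace (A : Matrix (Fin 2) (Fin 2) B) = 0 := A.2
  rw [Matrix.trace_fin_two] at h
  linear_combination h

/-- The symplectic involution is negation on `sl2(B)`. -/
lemma sympl_coe_sl2T {B : Type*} [CommRing B] (A : ↥(sl2T B)) :
    sympl (A : Matrix (Fin 2) (Fin 2) B) = -(A : Matrix (Fin 2) (Fin 2) B) := by
  ext i j
  fin_cases i <;> fin_cases j <;> simp [sympl, sl2T_apply_one_one]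

/-- Elements of `sl2(B) ⊕ vM₂(B)` are determined by their seven coordinates. -/
lemma sl2T_prod_ext {B : Type*} [CommRing B] {X Y : ↥(sl2T B) × Matrix (Fin 2) (Fin 2) B}
    (h00 : X.1.1 0 0 = Y.1.1 0 0) (h01 : X.1.1 0 1 = Y.1.1 0 1) (h10 : X.1.1 1 0 = Y.1.1 1 0)
    (k00 : X.2 0 0 = Y.2 0 0) (k01 : X.2 0 1 = Y.2 0 1) (k10 : X.2 1 0 = Y.2 1 0)
    (k11 : X.2 1 1 = Y.2 1 1) : X = Y := by
  refine Prod.ext (Subtype.ext (Matrix.ext fun i j => ?_)) (Matrix.ext fun i j => ?_)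
  · fin_cases i <;> fin_cases j
    exacts [h00, h01, h10, by simp [sl2T_apply_one_one, h00]]
  · fin_cases i <;> fin_cases j
    exacts [k00, k01, k10, k11]

lemma mtMul_fst_zero_zero {B : Type*} [CommRing B] (α : B)
    (X Y : ↥(sl2T B) × Matrix (Fin 2) (Fin 2) B) :
    (mtMul α X Y).1.1 0 0 = X.1.1 0 1 * Y.1.1 1 0 - Y.1.1 0 1 * X.1.1 1 0 +
      α * (Y.2 0 0 * X.2 1 1 - X.2 0 0 * Y.2 1 1 -
        (Y.2 0 1 * X.2 1 0 - X.2 0 1 * Y.2 1 0)) := by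
  simp [mtMul, mtMulMat, sympl, Matrix.mul_apply, sl2T_apply_one_one]
  ring

lemma mtMul_fst_zero_one {B : Type*} [CommRing B] (α : B)
    (X Y : ↥(sl2T B) × Matrix (Fin 2) (Fin 2) B) :
    (mtMul α X Y).1.1 0 1 = 2 * (X.1.1 0 0 * Y.1.1 0 1 - Y.1.1 0 0 * X.1.1 0 1) +
      2 * (α * (Y.2 0 1 * X.2 0 0 - X.2 0 1 * Y.2 0 0)) := by
  simp [mtMul, mtMulMat, sympl, Matrix.mul_apply, sl2T_apply_one_one]
  ring

lemma mtMul_fst_one_zero {B : Type*} [CommRing B] (α : B)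
    (X Y : ↥(sl2T B) × Matrix (Fin 2) (Fin 2) B) :
    (mtMul α X Y).1.1 1 0 = 2 * (X.1.1 1 0 * Y.1.1 0 0 - Y.1.1 1 0 * X.1.1 0 0) +
      2 * (α * (Y.2 1 0 * X.2 1 1 - X.2 1 0 * Y.2 1 1)) := by
  simp [mtMul, mtMulMat, sympl, Matrix.mul_apply, sl2T_apply_one_one]
  ring

lemma mtMul_snd_zero_zero {B : Type*} [CommRing B] (α : B)
    (X Y : ↥(sl2T B) × Matrix (Fin 2) (Fin 2) B) :
    (mtMul α X Y).2 0 0 = 2 * (Y.1.1 0 0 * X.2 0 0 + Y.1.1 0 1 * X.2 1 0 -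
      (X.1.1 0 0 * Y.2 0 0 + X.1.1 0 1 * Y.2 1 0)) := by
  simp [mtMul, sympl_coe_sl2T, Matrix.mul_apply]
  ring

lemma mtMul_snd_zero_one {B : Type*} [CommRing B] (α : B)
    (X Y : ↥(sl2T B) × Matrix (Fin 2) (Fin 2) B) :
    (mtMul α X Y).2 0 1 = 2 * (Y.1.1 0 0 * X.2 0 1 + Y.1.1 0 1 * X.2 1 1 -
      (X.1.1 0 0 * Y.2 0 1 + X.1.1 0 1 * Y.2 1 1)) := by
  simp [mtMul, sympl_coe_sl2T, Matrix.mul_apply]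
  ring

lemma mtMul_snd_one_zero {B : Type*} [CommRing B] (α : B)
    (X Y : ↥(sl2T B) × Matrix (Fin 2) (Fin 2) B) :
    (mtMul α X Y).2 1 0 = 2 * (Y.1.1 1 0 * X.2 0 0 - Y.1.1 0 0 * X.2 1 0 -
      (X.1.1 1 0 * Y.2 0 0 - X.1.1 0 0 * Y.2 1 0)) := by
  simp [mtMul, sympl_coe_sl2T, Matrix.mul_apply, sl2T_apply_one_one]
  ring

lemma mtMul_snd_one_one {B : Type*} [CommRing B] (α : B)
    (X Y : ↥(sl2T B) × Matrix (Fin 2) (Fin 2) B) :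
    (mtMul α X Y).2 1 1 = 2 * (Y.1.1 1 0 * X.2 0 1 - Y.1.1 0 0 * X.2 1 1 -
      (X.1.1 1 0 * Y.2 0 1 - X.1.1 0 0 * Y.2 1 1)) := by
  simp [mtMul, sympl_coe_sl2T, Matrix.mul_apply, sl2T_apply_one_one]
  ring

lemma mtMul_self {B : Type*} [CommRing B] (α : B) (X : ↥(sl2T B) × Matrix (Fin 2) (Fin 2) B) :
    mtMul α X X = 0 := by
  simp [mtMul, mtMulMat]

lemma mtMul_anticomm {B : Type*} [CommRing B] (α : B)
    (X Y : ↥(sl2T B) × Matrix (Fin 2) (Fin 2) B) : mtMul α X Y = -mtMul α Y X := by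
  refine Prod.ext (Subtype.ext ?_) ?_
  · simp only [mtMul, mtMulMat, Prod.fst_neg, Submodule.coe_neg, smul_sub]
    abel
  · simp only [mtMul, Prod.snd_neg]
    abel

/-- The Malcev identity, in Sagle's form. -/
lemma mtMul_malcev {B : Type*} [CommRing B] (α : B)
    (X Y Z W : ↥(sl2T B) × Matrix (Fin 2) (Fin 2) B) :
    mtMul α (mtMul α X Z) (mtMul α Y W) =
      mtMul α (mtMul α (mtMul α X Y) Z) W + mtMul α (mtMul α (mtMul α Y Z) W) X +
        mtMul α (mtMul α (mtMul α Z W) X) Y + mtMul α (mtMul α (mtMul α W X) Y) Z := by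
  apply sl2T_prod_ext <;>
    simp only [Prod.fst_add, Prod.snd_add, Submodule.coe_add, Matrix.add_apply,
      mtMul_fst_zero_zero, mtMul_fst_zero_one, mtMul_fst_one_zero,
      mtMul_snd_zero_zero, mtMul_snd_zero_one, mtMul_snd_one_zero, mtMul_snd_one_one] <;>
    ring

section
variable {K : Type*} [Field K] {U : Type*} [CommRing U] [Algebra K U]

/-- For a unital commutative associative `F`-algebra `U` and `α ∈ U`,
`M̃(sl₂(U), α)` is a Malcev algebra over `F` containing `sl₂(U)` as a subalgebra. -/
theorem stmt13
    (h2 : (2 : K) ≠ 0) (h3 : (3 : K) ≠ 0) (α : U) :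
    (∀ X : ↥(sl2T U) × Matrix (Fin 2) (Fin 2) U, mtMul α X X = 0) ∧
    (∀ X Y : ↥(sl2T U) × Matrix (Fin 2) (Fin 2) U, mtMul α X Y = -(mtMul α Y X)) ∧
    (∀ X Y Z W : ↥(sl2T U) × Matrix (Fin 2) (Fin 2) U,
      mtMul α (mtMul α X Z) (mtMul α Y W) =
        mtMul α (mtMul α (mtMul α X Y) Z) W +
        mtMul α (mtMul α (mtMul α Y Z) W) X +
        mtMul α (mtMul α (mtMul α Z W) X) Y +
        mtMul α (mtMul α (mtMul α W X) Y) Z) ∧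
    (∀ A A' : ↥(sl2T U),
      mtMul α (A, (0 : Matrix (Fin 2) (Fin 2) U)) (A', (0 : Matrix (Fin 2) (Fin 2) U)) =
        (⟨(A : Matrix (Fin 2) (Fin 2) U) * (A' : Matrix (Fin 2) (Fin 2) U) -
            (A' : Matrix (Fin 2) (Fin 2) U) * (A : Matrix (Fin 2) (Fin 2) U),
          comm_mem_sl2T _ _⟩, (0 : Matrix (Fin 2) (Fin 2) U))) := by
  refine ⟨mtMul_self α, mtMul_anticomm α, mtMul_malcev α, fun A A' => ?_⟩
  simp [mtMul, mtMulMat]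

end
end
end

section
/- Let M be a Malcev algebra over F lying in the variety H and containing L = sl2(F). Then: (i) Ann_M L is a subalgebra of M; (ii) (Ann_M L)·(aα) = 0 for every a ∈ L and every α in the centroid Γ(M); in particular (Ann_M L)·N_M = 0; (iii) for every m ∈ Ann_M L and every u ∈ M satisfying u(1)E = u(2), u(1)H = u(1), u(1)F = 0, u(2)E = 0, u(2)H = −u(2), u(2)F = −u(1) (where u(1) = u), one has (u(1)m)H = −2(u(1)m), (u(1)m)F = 0, (u(1)m)E = u(2)m, (u(2)m)H = 2(u(2)m), (u(2)m)F = −(u(1)m), (u(2)m)E = 0; consequently (Ann_M L)·J_M ⊆ J_M. -/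
section
variable {K : Type*} [Field K] {M : Type*} [AddCommGroup M] [Module K M]

/-- the Jacobian `J(x,y,z) = (xy)z + (yz)x + (zx)y` -/
def mjac (μ : M →ₗ[K] M →ₗ[K] M) (x y z : M) : M :=
  μ (μ x y) z + μ (μ y z) x + μ (μ z x) y

/-- `{x,y,z} = (xy)z − (xz)y + 2·x(yz)` -/
def mbr (μ : M →ₗ[K] M →ₗ[K] M) (x y z : M) : M :=
  μ (μ x y) z - μ (μ x z) y + (2 : K) • μ x (μ y z)

/-- `h(y,z,t,x,u) = {yz,t,u}x + {yz,t,x}u + {yx,z,u}t + {yu,z,x}t` -/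
def mh (μ : M →ₗ[K] M →ₗ[K] M) (y z t x u : M) : M :=
  μ (mbr μ (μ y z) t u) x + μ (mbr μ (μ y z) t x) u +
    μ (mbr μ (μ y x) z u) t + μ (mbr μ (μ y u) z x) t

/-- A Malcev algebra structure: anticommutative (`x·x = 0`) together with the Malcev
identity `(xz)(yt) = ((xy)z)t + ((yz)t)x + ((zt)x)y + ((tx)y)z`. -/
def IsMalcev (μ : M →ₗ[K] M →ₗ[K] M) : Prop :=
  (∀ x, μ x x = 0) ∧
    ∀ x y z t, μ (μ x z) (μ y t) =
      μ (μ (μ x y) z) t + μ (μ (μ y z) t) x + μ (μ (μ z t) x) y + μ (μ (μ t x) y) z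

/-- the variety 𝓗 : `h(y,z,t,x,u) = 0` identically -/
def InVarietyH (μ : M →ₗ[K] M →ₗ[K] M) : Prop := ∀ y z t x u, mh μ y z t x u = 0

/-- `N_M = {m | J(m,a,b) = 0 ∀ a,b ∈ L}` -/
def NMset (μ : M →ₗ[K] M →ₗ[K] M) (L : Submodule K M) : Set M :=
  {m : M | ∀ a ∈ L, ∀ b ∈ L, mjac μ m a b = 0}

/-- `J_M = {m | {m,a,b} = 0 ∀ a,b ∈ L}` -/
def JMset (μ : M →ₗ[K] M →ₗ[K] M) (L : Submodule K M) : Set M :=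
  {m : M | ∀ a ∈ L, ∀ b ∈ L, mbr μ m a b = 0}

/-- the centroid Γ(M): linear operators commuting with all multiplications -/
def centroid (μ : M →ₗ[K] M →ₗ[K] M) : Set (Module.End K M) :=
  {α | ∀ x y : M, α (μ x y) = μ x (α y) ∧ α (μ x y) = μ (α x) y}

/-- `p(x,y,z,t) = −{zt,x,y} − {yt,z,x} + {xt,y,z}` -/
def pfun (μ : M →ₗ[K] M →ₗ[K] M) (x y z t : M) : M :=
  -(mbr μ (μ z t) x y) - mbr μ (μ y t) z x + mbr μ (μ x t) y z

/-- `U`: the span of the operators `α(y,a,b) : x ↦ p(x,y,a,b)` with `y ∈ M`, `a,b ∈ L` -/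
def Uspan (μ : M →ₗ[K] M →ₗ[K] M) (L : Submodule K M) : Submodule K (Module.End K M) :=
  Submodule.span K {φ : Module.End K M | ∃ y : M, ∃ a ∈ L, ∃ b ∈ L, ∀ x, φ x = pfun μ x y a b}

/-- `N_M = L·U`: the span of the elements `aα`, `a ∈ L`, `α ∈ U` -/
def NMspan (μ : M →ₗ[K] M →ₗ[K] M) (L : Submodule K M) : Submodule K M :=
  Submodule.span K {m : M | ∃ a ∈ L, ∃ φ ∈ Uspan μ L, m = φ a}

/-- the linear operator `m ↦ J(m,a,b)` -/
def jop (μ : M →ₗ[K] M →ₗ[K] M) (a b : M) : M →ₗ[K] M :=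
  μ.flip b ∘ₗ μ.flip a + μ (μ a b) + μ.flip a ∘ₗ μ b

/-- the linear operator `m ↦ {m,a,b}` -/
def bop (μ : M →ₗ[K] M →ₗ[K] M) (a b : M) : M →ₗ[K] M :=
  μ.flip b ∘ₗ μ.flip a - μ.flip a ∘ₗ μ.flip b + (2 : K) • μ.flip (μ a b)

/-- `N_M` as a submodule (intersection of the kernels of `m ↦ J(m,a,b)`, `a,b ∈ L`) -/
def NMker (μ : M →ₗ[K] M →ₗ[K] M) (L : Submodule K M) : Submodule K M :=
  ⨅ (a : M) (_ : a ∈ L) (b : M) (_ : b ∈ L), LinearMap.ker (jop μ a b)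

/-- `J_M` as a submodule (intersection of the kernels of `m ↦ {m,a,b}`, `a,b ∈ L`) -/
def JMker (μ : M →ₗ[K] M →ₗ[K] M) (L : Submodule K M) : Submodule K M :=
  ⨅ (a : M) (_ : a ∈ L) (b : M) (_ : b ∈ L), LinearMap.ker (bop μ a b)

/-- `Ann_M L` as a set -/
def AnnSet (μ : M →ₗ[K] M →ₗ[K] M) (L : Submodule K M) : Set M :=
  {m : M | ∀ a ∈ L, μ m a = 0}

/-- `Ann_M L` as a submodule -/
def Annker (μ : M →ₗ[K] M →ₗ[K] M) (L : Submodule K M) : Submodule K M :=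
  ⨅ (a : M) (_ : a ∈ L), LinearMap.ker (μ.flip a)

/-- `V = {w ∈ J_M : wH = w, wF = 0}` as a set -/
def Vset (μ : M →ₗ[K] M →ₗ[K] M) (L : Submodule K M) (Hm Fm : M) : Set M :=
  {w : M | w ∈ JMset μ L ∧ μ w Hm = w ∧ μ w Fm = 0}

/-- `V = {w ∈ J_M : wH = w, wF = 0}` as a submodule -/
def Vsub (μ : M →ₗ[K] M →ₗ[K] M) (L : Submodule K M) (Hm Fm : M) : Submodule K M :=
  JMker μ L ⊓ LinearMap.ker (μ.flip Hm - LinearMap.id) ⊓ LinearMap.ker (μ.flip Fm)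

theorem IsMalcev.anticomm {μ : M →ₗ[K] M →ₗ[K] M} (hMal : IsMalcev μ) (x y : M) :
    μ x y = -μ y x := by
  have h := hMal.1 (x + y)
  simp only [map_add, LinearMap.add_apply, hMal.1, zero_add, add_zero] at h
  exact eq_neg_of_add_eq_zero_right h

/-- In the variety `𝓗` the operators `x ↦ p(x,y,z,t)` commute with right multiplications. -/
theorem pfun_mul {μ : M →ₗ[K] M →ₗ[K] M} (hMal : IsMalcev μ) (hVarH : InVarietyH μ)
    (x y z t w : M) : μ (pfun μ x y z t) w = pfun μ (μ x w) y z t := by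
  have anti := hMal.anticomm
  have e0 := hMal.2 x w y (μ z t)
  have e1 := hMal.2 x y w (μ z t)
  have e2 := hMal.2 (μ x y) t w z
  have e3 := hMal.2 (μ x w) t y z
  have e4 := hMal.2 x (μ y z) w t
  have e5 := hVarH y z w x t
  have e6 := hMal.2 x t (μ y z) w
  have e7 := hMal.2 (μ x y) t z w
  have e8 := congrArg (fun v => μ v z) (hMal.2 x y w t)
  have e9 := hMal.2 (μ x w) t z y
  have e10 := hVarH t x y z w
  have e11 := hMal.2 (μ x w) z t y
  have e12 := hMal.2 (μ x w) y z t
  have e13 := hVarH w t z x y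
  have e14 := hMal.2 x z (μ t w) y
  have e15 := hMal.2 x (μ t w) y z
  have e16 := congrArg (fun v => μ v z) (hMal.2 x t w y)
  have hx (A B : M) := anti x (μ A B)
  have hy (A B : M) := anti y (μ A B)
  have hz (A B : M) := anti z (μ A B)
  have ht (A B : M) := anti t (μ A B)
  have hw (A B : M) := anti w (μ A B)
  have h23 (A B C D E : M) := anti (μ A B) (μ (μ C D) E)
  have hyx (A B : M) := anti (μ y A) (μ x B)
  have hzx (A B : M) := anti (μ z A) (μ x B)
  have htx (A B : M) := anti (μ t A) (μ x B)
  simp only [mh, mbr, pfun, map_add, map_sub, map_neg, map_smul, LinearMap.add_apply,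
    LinearMap.sub_apply, LinearMap.neg_apply, LinearMap.smul_apply, hx, hy, hz, ht, hw, h23, hyx,
    hzx, htx, anti y x, anti z x, anti t x, anti w x, anti z y, anti t y, anti w y, anti t z,
    anti w z, anti w t, anti (μ t w) (μ y z)]
    at e0 e1 e2 e3 e4 e5 e6 e7 e8 e9 e10 e11 e12 e13 e14 e15 e16 ⊢
  linear_combination (norm := module) e0 + e1 - e2 + e3 - e4 - e5 - e6 - e7 - e8 - e9 - e10
    + e11 + e12 + e13 + e14 + e15 - e16

section

variable {μ : M →ₗ[K] M →ₗ[K] M} {L : Submodule K M}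

theorem mul_apply_centroid_eq_zero {m a : M} (hm : m ∈ AnnSet μ L) (ha : a ∈ L)
    {α : Module.End K M} (hα : α ∈ centroid μ) : μ m (α a) = 0 := by
  rw [← (hα m a).1, hm a ha, map_zero]

theorem Uspan_subset_centroid (hMal : IsMalcev μ) (hVarH : InVarietyH μ) :
    ∀ α ∈ Uspan μ L, α ∈ centroid μ := by
  intro α hα
  induction hα using Submodule.span_induction with
  | mem φ hφ =>
    obtain ⟨y, a, -, b, -, hφ⟩ := hφ
    have key (x w : M) : φ (μ x w) = μ (φ x) w := by
      rw [hφ, hφ, pfun_mul hMal hVarH]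
    refine fun x w => ⟨?_, key x w⟩
    rw [hMal.anticomm x w, map_neg, key, hMal.anticomm x]
  | zero => exact fun x y => by simp
  | add α β _ _ hα hβ =>
    exact fun x y => by simp [← (hα x y).1, ← (hβ x y).1, ← (hα x y).2, ← (hβ x y).2]
  | smul c α _ hα => exact fun x y => by simp [← (hα x y).1, ← (hα x y).2]

theorem mul_NMspan_eq_zero (hMal : IsMalcev μ) (hVarH : InVarietyH μ) {m n : M}
    (hm : m ∈ AnnSet μ L) (hn : n ∈ NMspan μ L) : μ m n = 0 := by
  have : NMspan μ L ≤ LinearMap.ker (μ m) := by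
    refine Submodule.span_le.2 ?_
    rintro _ ⟨a, ha, α, hα, rfl⟩
    exact mul_apply_centroid_eq_zero hm ha (Uspan_subset_centroid hMal hVarH α hα)
  exact this hn

theorem AnnSet.mul_left_eq_zero (hMal : IsMalcev μ) {m a : M} (hm : m ∈ AnnSet μ L)
    (ha : a ∈ L) : μ a m = 0 := by
  rw [hMal.anticomm, hm a ha, neg_zero]

theorem mul_mul_mul_of_mem_AnnSet (hMal : IsMalcev μ) {m a b : M} (hm : m ∈ AnnSet μ L)
    (ha : a ∈ L) (hb : b ∈ L) (v : M) :
    μ (μ v m) (μ a b) = μ (μ (μ v a) m) b - μ (μ (μ v b) a) m := by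
  have h := hMal.2 v a m b
  simp only [AnnSet.mul_left_eq_zero hMal hm ha, hm b hb, map_zero, LinearMap.zero_apply,
    add_zero] at h
  rw [h, hMal.anticomm b v]
  simp [sub_eq_add_neg]

theorem mul_mul_mul_eq_of_mem_AnnSet (hMal : IsMalcev μ) {m a b : M} (hm : m ∈ AnnSet μ L)
    (ha : a ∈ L) (hb : b ∈ L) (v : M) :
    μ (μ (μ v m) a) b = μ (μ v (μ a b)) m + μ (μ (μ v b) m) a := by
  have h := hMal.2 v m a b
  simp only [hm a ha, hm b hb, map_zero, LinearMap.zero_apply, add_zero] at h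
  rw [hMal.anticomm (μ a b) v, hMal.anticomm b v] at h
  simp only [map_neg, LinearMap.neg_apply] at h
  linear_combination (norm := module) -h

theorem mul_mul_mul_eq_zero_of_mem_AnnSet (hMal : IsMalcev μ) {m m' : M} (hm : m ∈ AnnSet μ L)
    (hm' : m' ∈ AnnSet μ L) {a b : M} (ha : a ∈ L) (hb : b ∈ L) :
    μ (μ m m') (μ a b) = 0 := by
  rw [mul_mul_mul_of_mem_AnnSet hMal hm' ha hb, hm a ha, hm b hb]
  simp

theorem mul_mem_JMset (hMal : IsMalcev μ) {m j : M} (hm : m ∈ AnnSet μ L)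
    (hj : j ∈ JMset μ L) : μ j m ∈ JMset μ L := by
  intro a ha b hb
  have hab := mul_mul_mul_of_mem_AnnSet hMal hm ha hb j
  have hba := mul_mul_mul_of_mem_AnnSet hMal hm hb ha j
  have h := mul_mul_mul_eq_of_mem_AnnSet hMal hm ha hb j
  have h' := mul_mul_mul_eq_of_mem_AnnSet hMal hm hb ha j
  have hJ := congrArg (fun v => μ v m) (hj a ha b hb)
  rw [hMal.anticomm b a] at hba h'
  simp only [mbr, map_add, map_sub, map_neg, map_smul, LinearMap.add_apply,
    LinearMap.sub_apply, LinearMap.neg_apply, LinearMap.smul_apply, map_zero,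
    LinearMap.zero_apply] at hba h' hJ ⊢
  linear_combination (norm := module) hJ + h - h' + hab - hba

end

/-- (i) `Ann_M L` is a subalgebra; (ii) `(Ann_M L)·(aα) = 0` for
`a ∈ L`, `α ∈ Γ(M)`, in particular `(Ann_M L)·N_M = 0`; (iii) for `m ∈ Ann_M L` and a
`V₂`-pair `(u(1), u(2))`, the elements `u(1)m, u(2)m` form another `V₂`-pair;
consequently `(Ann_M L)·J_M ⊆ J_M`. -/
theorem stmt14
    (h2 : (2 : K) ≠ 0) (h3 : (3 : K) ≠ 0)
    (μ : M →ₗ[K] M →ₗ[K] M) (hMal : IsMalcev μ) (hVarH : InVarietyH μ)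
    (E H F : M) (hind : LinearIndependent K ![E, H, F])
    (hEH : μ E H = E) (hFH : μ F H = -F) (hEF : μ E F = (2⁻¹ : K) • H)
    (L : Submodule K M) (hL : L = Submodule.span K {E, H, F}) :
    (∀ m ∈ AnnSet μ L, ∀ m' ∈ AnnSet μ L, μ m m' ∈ AnnSet μ L) ∧
    (∀ m ∈ AnnSet μ L, ∀ a ∈ L, ∀ α ∈ centroid μ, μ m (α a) = 0) ∧
    (∀ m ∈ AnnSet μ L, ∀ n ∈ NMspan μ L, μ m n = 0) ∧
    (∀ m ∈ AnnSet μ L, ∀ u1 u2 : M,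
      μ u1 E = u2 → μ u1 H = u1 → μ u1 F = 0 →
      μ u2 E = 0 → μ u2 H = -u2 → μ u2 F = -u1 →
        μ (μ u1 m) H = (-2 : K) • μ u1 m ∧
        μ (μ u1 m) F = 0 ∧
        μ (μ u1 m) E = μ u2 m ∧
        μ (μ u2 m) H = (2 : K) • μ u2 m ∧
        μ (μ u2 m) F = -(μ u1 m) ∧
        μ (μ u2 m) E = 0) ∧
    (∀ m ∈ AnnSet μ L, ∀ j ∈ JMset μ L, μ m j ∈ JMset μ L) := by
  have hE : E ∈ L := hL ▸ Submodule.subset_span (by simp)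
  have hH : H ∈ L := hL ▸ Submodule.subset_span (by simp)
  have hF : F ∈ L := hL ▸ Submodule.subset_span (by simp)
  refine ⟨?_, fun m hm a ha α hα => mul_apply_centroid_eq_zero hm ha hα,
    fun m hm n hn => mul_NMspan_eq_zero hMal hVarH hm hn, ?_, ?_⟩
  · intro m hm m' hm' a ha
    have hLker : L ≤ LinearMap.ker (μ (μ m m')) := by
      rw [hL, Submodule.span_le]
      have h := fun {a b : M} => mul_mul_mul_eq_zero_of_mem_AnnSet hMal hm hm' (a := a) (b := b)
      rintro x (rfl | rfl | rfl)
      · simpa [hEH] using h hE hH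
      · simpa [hEF, h2] using h hE hF
      · simpa [hFH] using h hF hH
    exact hLker ha
  · intro m hm u1 u2 h1E h1H h1F h2E h2H h2F
    have h := fun {a b : M} (ha : a ∈ L) (hb : b ∈ L) (v : M) =>
      mul_mul_mul_of_mem_AnnSet hMal hm ha hb v
    have e1 : μ u1 m = 0 := by
      have hHH := h hH hH u1
      have hEF' := h hF hE u1
      rw [hMal.anticomm F E, hEF] at hEF'
      simp only [hMal.1, h1E, h1H, h1F, h2F, map_zero, map_neg, map_smul, LinearMap.zero_apply,
        LinearMap.neg_apply] at hHH hEF'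
      have hsmul : (3 : K) • μ u1 m = 0 := by
        linear_combination (norm := skip) hHH - (2 : K) • hEF'
        match_scalars <;> field_simp <;> norm_num
      exact (smul_eq_zero.1 hsmul).resolve_left h3
    have e2 : μ u2 m = 0 := by
      have hHH := h hH hH u2
      have hEF' := h hE hF u2
      rw [hEF] at hEF'
      simp only [hMal.1, h1E, h2E, h2H, h2F, map_zero, map_neg, map_smul, LinearMap.zero_apply,
        LinearMap.neg_apply] at hHH hEF'
      have hsmul : (3 : K) • μ u2 m = 0 := by
        linear_combination (norm := skip) hHH - (2 : K) • hEF'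
        match_scalars <;> field_simp <;> norm_num
      exact (smul_eq_zero.1 hsmul).resolve_left h3
    simp [e1, e2]
  · intro m hm j hj a ha b hb
    have h := mul_mem_JMset hMal hm hj a ha b hb
    rw [hMal.anticomm m j]
    simp only [mbr, map_neg, LinearMap.neg_apply, smul_neg] at h ⊢
    linear_combination (norm := module) -h

end
end

section
/- Let B be a unital commutative associative algebra over F and consider the exceptional Malcev algebra M7(B) = sl2(B) ⊕ vM2(B). Identify V = B² inside vM2(B) by (a,b)(1) = v[[a,b],[0,0]] and (a,b)(2) = v[[0,0],[a,b]]. Then for all (a,b), (c,d) ∈ B²: (a,b)(1)·(c,d)(1) = −4(ad − bc)·F, (a,b)(1)·(c,d)(2) = (a,b)(2)·(c,d)(1) = −2(ad − bc)·H, (a,b)(2)·(c,d)(2) = −4(ad − bc)·E, where E = [[0,0],[1/2,0]], H = [[1/2,0],[0,−1/2]], F = [[0,−1/2],[0,0]]; furthermore the skew-symmetric B-bilinear map ⟨(a,b),(c,d)⟩ = −4(ad − bc) satisfies w⟨u,v⟩ + u⟨v,w⟩ + v⟨w,u⟩ = 0 for all u, v, w ∈ B². -/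
section
variable (K : Type*) [Field K] (B : Type*) [CommRing B] [Algebra K B]

variable (V : Type*) [AddCommGroup V] [Module B V]

section
variable (K : Type*) [Field K] (B : Type*) [CommRing B] [Algebra K B]

lemma tz_mem (p q r : B) : !![p, q; r, -p] ∈ sl2T B := by
  rw [sl2T, LinearMap.mem_ker, Matrix.traceLinearMap_apply, Matrix.trace_fin_two]
  simp

/-- `E = [[0,0],[1/2,0]]` as an element of `sl₂(B)` -/
noncomputable def Esl : ↥(sl2T B) :=
  ⟨!![0, 0; algebraMap K B 2⁻¹, 0], by simpa using tz_mem B 0 0 (algebraMap K B 2⁻¹)⟩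

/-- `H = [[1/2,0],[0,−1/2]]` as an element of `sl₂(B)` -/
noncomputable def Hsl : ↥(sl2T B) :=
  ⟨!![algebraMap K B 2⁻¹, 0; 0, -(algebraMap K B 2⁻¹)], tz_mem B _ 0 0⟩

/-- `F = [[0,−1/2],[0,0]]` as an element of `sl₂(B)` -/
noncomputable def Fsl : ↥(sl2T B) :=
  ⟨!![0, -(algebraMap K B 2⁻¹); 0, 0], by simpa using tz_mem B 0 (-(algebraMap K B 2⁻¹)) 0⟩

/-- In `M₇(B)` with `(a,b)(1) = v[[a,b],[0,0]]`,
`(a,b)(2) = v[[0,0],[a,b]]`, the products of the `V`-elements are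
`(a,b)(1)(c,d)(1) = −4(ad−bc)F`, `(a,b)(1)(c,d)(2) = (a,b)(2)(c,d)(1) = −2(ad−bc)H`,
`(a,b)(2)(c,d)(2) = −4(ad−bc)E`, and `⟨(a,b),(c,d)⟩ = −4(ad−bc)` is skew-symmetric and
satisfies `w⟨u,v⟩ + u⟨v,w⟩ + v⟨w,u⟩ = 0`. -/
theorem stmt17
    (h2 : (2 : K) ≠ 0) (h3 : (3 : K) ≠ 0) :
    (∀ a b c d : B,
      m7Mul ((0 : ↥(sl2T B)), !![a, b; 0, 0]) (0, !![c, d; 0, 0]) =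
        ((-(4 : B) * (a * d - b * c)) • Fsl K B, 0) ∧
      m7Mul ((0 : ↥(sl2T B)), !![a, b; 0, 0]) (0, !![(0 : B), 0; c, d]) =
        ((-(2 : B) * (a * d - b * c)) • Hsl K B, 0) ∧
      m7Mul ((0 : ↥(sl2T B)), !![(0 : B), 0; a, b]) (0, !![c, d; 0, 0]) =
        ((-(2 : B) * (a * d - b * c)) • Hsl K B, 0) ∧
      m7Mul ((0 : ↥(sl2T B)), !![(0 : B), 0; a, b]) (0, !![(0 : B), 0; c, d]) =
        ((-(4 : B) * (a * d - b * c)) • Esl K B, 0)) ∧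
    (∀ u v : B × B,
      -(4 : B) * (u.1 * v.2 - u.2 * v.1) = -(-(4 : B) * (v.1 * u.2 - v.2 * u.1))) ∧
    (∀ u v w : B × B,
      (-(4 : B) * (u.1 * v.2 - u.2 * v.1)) • w + (-(4 : B) * (v.1 * w.2 - v.2 * w.1)) • u +
        (-(4 : B) * (w.1 * u.2 - w.2 * u.1)) • v = 0) := by
  have hh : algebraMap K B 2⁻¹ * 2 = 1 := by
    rw [← map_ofNat (algebraMap K B) 2, ← map_mul, inv_mul_cancel₀ h2, map_one]
  refine ⟨fun a b c d => ⟨?_, ?_, ?_, ?_⟩, fun u v => by ring, fun u v w => ?_⟩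
  case refine_5 => ext <;> simp <;> ring
  all_goals
    refine Prod.ext (Subtype.ext ?_) (by simp [m7Mul, mtMul, sympl, ← Matrix.ext_iff])
    ext i j
    fin_cases i <;> fin_cases j <;>
      simp [m7Mul, mtMul, mtMulMat, sympl, Esl, Hsl, Fsl] <;> grind

end
end
end
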